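/- arXiv:math/0503011 — 3 statements merged into one kernel-verified Lean document; each statement's English description precedes it below -/
import Mathlib

section
/- Let c = (c_1,…,c_k) and d = (d_1,…,d_l) be compositions of n and let M = (m_{ij}) ∈ 𝓜_{c,d}. Then X_{colr(M)} is the disjoint union, over σ ∈ C(M) ∩ X_d, of the sets X_c·σ = {ρσ : ρ ∈ X_c}: every element of X_{colr(M)} lies in exactly one such set X_c·σ, and conversely every product ρσ with ρ ∈ X_c and σ ∈ C(M) ∩ X_d belongs to X_{colr(M)}. -/
/-!
Statement 5: Solomon's coset decomposition for the symmetric group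
(Corollary `co:CombiSymmGp` of the paper).
-/

open Equiv Finset

/-- Partial sum `t_i = c_1 + ⋯ + c_i` of the parts of a composition with index `< i`. -/
def compPsum {m : ℕ} (c : Fin m → ℕ) (i : Fin m) : ℕ :=
  ∑ i' ∈ Finset.univ.filter (fun i' => i' < i), c i'

/-- `X_c`: the set of permutations of `Fin n` that are increasing on each of the blocks
of the composition `c` (a composition of `n`, possibly with parts equal to zero). -/
def Xset (n : ℕ) {m : ℕ} (c : Fin m → ℕ) : Set (Equiv.Perm (Fin n)) :=
  {σ | ∀ (i : Fin m) (a b : Fin n),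
    compPsum c i ≤ a.val → a < b → b.val < compPsum c i + c i → σ a < σ b}

/-- The double coset `C(M)` of `S_c\S_n/S_d` attached to a matrix `M` with row sums `c`
and column sums `d`:  permutations `σ` such that `m_{ij}` is the number of elements of the
`j`-th `d`-block whose image under `σ` lies in the `i`-th `c`-block. -/
def dblCoset (n : ℕ) {k l : ℕ} (c : Fin k → ℕ) (d : Fin l → ℕ) (M : Fin k → Fin l → ℕ) :
    Set (Equiv.Perm (Fin n)) :=
  {σ | ∀ i j, M i j =
    (Finset.univ.filter (fun x : Fin n =>
      compPsum d j ≤ x.val ∧ x.val < compPsum d j + d j ∧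
      compPsum c i ≤ (σ x).val ∧ (σ x).val < compPsum c i + c i)).card}

/-- The column reading `colr(M)` of a `k × l` matrix, as a composition (possibly with zero
parts) with `l * k` parts: `(m_{11}, m_{21}, …, m_{k1}, m_{12}, …, m_{kl})`. -/
def colr {k l : ℕ} (M : Fin k → Fin l → ℕ) : Fin (l * k) → ℕ := fun x =>
  have h1 : 0 < l * k := Nat.lt_of_le_of_lt (Nat.zero_le _) x.isLt
  have hk : 0 < k := by
    rcases Nat.eq_zero_or_pos k with h | h
    · subst h; simp at h1
    · exact h
  M ⟨x.val % k, Nat.mod_lt _ hk⟩ ⟨x.val / k, (Nat.div_lt_iff_lt_mul hk).mpr x.isLt⟩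

/-!
Write `p` and `q` for the maps sending a position to the index of its `c`-block, resp. `d`-block,
and `r` for the map sending a position `x` to `i`, where `m_{ij}` is the part of `colr(M)` whose
block contains `x`. A weakly increasing word is determined by its letter multiplicities; applied to
words of pairs `(j, i)` ordered lexicographically, this shows that `σ ∈ X_d` lies in `C(M)` if and
only if `p ∘ σ = r`. On the other hand, sorting the positions `x` by `(r x, π x)` shows that every
permutation `π` is uniquely of the form `ρσ` with `ρ ∈ X_c` and `p ∘ σ = r`. Finally, for such `ρ`
and `σ`, the product `ρσ` lies in `X_{colr(M)}` if and only if `σ ∈ X_d`.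
-/

section Fibers

variable {α β γ ι κ : Type*}

/-- `f` is strictly increasing on each fiber of `p`. For `p` the block index of a composition `c`
this is membership in `X_c`. -/
def StrictMonoOnFibers [LT α] [LT β] (p : α → ι) (f : α → β) : Prop :=
  ∀ ⦃a b⦄, p a = p b → a < b → f a < f b

theorem strictMonoOnFibers_comp_iff [LT α] [LT β] {e : ι → κ} (he : Function.Injective e)
    {p : α → ι} {f : α → β} : StrictMonoOnFibers (e ∘ p) f ↔ StrictMonoOnFibers p f := by
  simp only [StrictMonoOnFibers, Function.comp_apply, he.eq_iff]

theorem monotone_toLex_iff [Preorder α] [PartialOrder ι] [Preorder β] {p : α → ι} {f : α → β} :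
    Monotone (fun x => toLex (p x, f x)) ↔
      Monotone p ∧ ∀ ⦃a b⦄, p a = p b → a ≤ b → f a ≤ f b := by
  simp only [Monotone, Prod.Lex.toLex_le_toLex, le_iff_lt_or_eq (α := ι)]
  grind

theorem strictMono_toLex_iff [PartialOrder α] [PartialOrder ι] [Preorder β]
    {p : α → ι} {f : α → β} :
    StrictMono (fun x => toLex (p x, f x)) ↔ Monotone p ∧ StrictMonoOnFibers p f := by
  simp only [monotone_iff_forall_lt, StrictMono, StrictMonoOnFibers, Prod.Lex.toLex_lt_toLex,
    le_iff_lt_or_eq (α := ι)]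
  grind

theorem StrictMonoOnFibers.monotone_toLex_comp [PartialOrder α] [PartialOrder ι] [Preorder β]
    [Preorder κ] {q : α → ι} {f : α → β} {p : β → κ} (hf : StrictMonoOnFibers q f)
    (hq : Monotone q) (hp : Monotone p) : Monotone (fun x => toLex (q x, (p ∘ f) x)) := by
  refine monotone_toLex_iff.2 ⟨hq, fun a b hqab hab => hp ?_⟩
  obtain rfl | hlt := hab.eq_or_lt
  · exact le_rfl
  · exact (hf hqab hlt).le

theorem StrictMonoOnFibers.comp_iff [Preorder α] [LinearOrder β] [Preorder γ]
    [PartialOrder ι] [PartialOrder κ] {p : β → κ} {q : α → ι} {σ : α → β} {ρ : β → γ}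
    (hρ : StrictMonoOnFibers p ρ) (hp : Monotone p)
    (hqσ : Monotone (fun x => toLex (q x, (p ∘ σ) x))) :
    StrictMonoOnFibers (fun x => (q x, (p ∘ σ) x)) (ρ ∘ σ) ↔ StrictMonoOnFibers q σ := by
  constructor
  · intro hρσ a b hqab hab
    by_contra! hba
    have hpab : p (σ a) = p (σ b) :=
      le_antisymm ((monotone_toLex_iff.1 hqσ).2 hqab hab.le) (hp hba)
    have hρab : ρ (σ a) < ρ (σ b) := hρσ (Prod.ext hqab hpab) hab
    obtain heq | hlt := hba.eq_or_lt
    · exact hρab.ne (congrArg ρ heq.symm)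
    · exact hρab.asymm (hρ hpab.symm hlt)
  · intro hσ a b hab hlt
    exact hρ (congrArg Prod.snd hab) (hσ (congrArg Prod.fst hab) hlt)

theorem exists_equiv_comp_eq [Fintype α] [Fintype β] [DecidableEq ι] {f : α → ι} {g : β → ι}
    (h : ∀ i, #{x | f x = i} = #{x | g x = i}) : ∃ e : α ≃ β, g ∘ e = f := by
  have fiberEquiv (i : ι) : Nonempty ({x // f x = i} ≃ {x // g x = i}) :=
    ⟨Fintype.equivOfCardEq (by simpa only [Fintype.card_subtype] using h i)⟩
  exact ⟨ofFiberEquiv fun i => (fiberEquiv i).some, funext (ofFiberEquiv_map _)⟩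

theorem eq_of_monotone_of_card_fiber_eq {n : ℕ} [PartialOrder ι] [DecidableEq ι] {f g : Fin n → ι}
    (hf : Monotone f) (hg : Monotone g) (h : ∀ i, #{x | f x = i} = #{x | g x = i}) : f = g := by
  obtain ⟨e, rfl⟩ := exists_equiv_comp_eq h
  exact Tuple.unique_monotone (τ := 1) hf hg

theorem existsUnique_perm_comp_eq_and_strictMonoOnFibers {n : ℕ} [LinearOrder κ]
    {p r : Fin n → κ} (hp : Monotone p) (h : ∀ i, #{x | p x = i} = #{x | r x = i})
    (π : Perm (Fin n)) :
    ∃! σ : Perm (Fin n), p ∘ σ = r ∧ StrictMonoOnFibers p (π * σ⁻¹ : Perm (Fin n)) := by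
  let f : Fin n → κ ×ₗ Fin n := fun x => toLex (r x, π x)
  have f_injective : Function.Injective f := fun a b hab =>
    π.injective (congrArg (fun z => (ofLex z).2) hab)
  refine existsUnique_of_exists_of_unique ?_ ?_
  · let τ := Tuple.sort f
    have sorted : StrictMono (fun x => toLex ((r ∘ τ) x, (π * τ) x)) :=
      (Tuple.monotone_sort f).strictMono_of_injective (f_injective.comp τ.injective)
    obtain ⟨hrτ, hπτ⟩ := strictMono_toLex_iff.1 sorted
    have hrp : r ∘ τ = p := by
      refine eq_of_monotone_of_card_fiber_eq hrτ hp fun i => ?_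
      rw [h i]
      exact card_equiv τ (by simp)
    refine ⟨τ⁻¹, ?_, ?_⟩
    · ext x
      simp [← hrp]
    · rwa [inv_inv, ← hrp]
  · rintro σ σ' ⟨hσ, hπσ⟩ ⟨hσ', hπσ'⟩
    have sorted {s : Perm (Fin n)} (hs : p ∘ s = r)
        (hπs : StrictMonoOnFibers p (π * s⁻¹ : Perm (Fin n))) :
        Monotone (f ∘ (s⁻¹ : Perm (Fin n))) := by
      have hfs : f ∘ (s⁻¹ : Perm (Fin n)) = fun x => toLex (p x, (π * s⁻¹) x) := by
        funext x
        simp [f, ← hs]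
      exact hfs ▸ (strictMono_toLex_iff.2 ⟨hp, hπs⟩).monotone
    have hf := Tuple.unique_monotone (sorted hσ hπσ) (sorted hσ' hπσ')
    exact inv_injective (DFunLike.coe_injective (f_injective.comp_left hf))

end Fibers

section Blocks

variable {n m : ℕ} {c : Fin m → ℕ}

theorem compPsum_add_le {i j : Fin m} (hij : i < j) : compPsum c i + c i ≤ compPsum c j := by
  rw [compPsum, compPsum, add_comm, ← sum_insert (by simp)]
  refine sum_le_sum_of_subset fun x hx => ?_
  simp only [mem_insert, mem_filter, mem_univ, true_and] at hx ⊢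
  exact hx.elim (· ▸ hij) (·.trans hij)

theorem val_finSigmaFinEquiv (y : (i : Fin m) × Fin (c i)) :
    (finSigmaFinEquiv y : ℕ) = compPsum c y.1 + y.2 := by
  rw [finSigmaFinEquiv_apply, compPsum]
  congr 1
  refine sum_nbij (Fin.castLE y.1.2.le) (fun i _ => mem_filter.2 ⟨mem_univ _, i.2⟩)
    (Fin.castLE_injective _).injOn (fun i hi => ?_) (fun _ _ => rfl)
  have hi : i < y.1 := by simpa using hi
  exact ⟨⟨i, hi⟩, by simp, rfl⟩

/-- The index of the block of the composition `c` of `n` that contains a position. -/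
def blockIndex (c : Fin m → ℕ) (h : ∑ i, c i = n) (x : Fin n) : Fin m :=
  (finSigmaFinEquiv.symm (Fin.cast h.symm x)).1

variable (h : ∑ i, c i = n)

theorem val_mem_Ico_blockIndex (x : Fin n) :
    (x : ℕ) ∈ Set.Ico (compPsum c (blockIndex c h x))
      (compPsum c (blockIndex c h x) + c (blockIndex c h x)) := by
  have hx := val_finSigmaFinEquiv (finSigmaFinEquiv.symm (Fin.cast h.symm x))
  rw [apply_symm_apply, Fin.val_cast] at hx
  exact ⟨hx ▸ Nat.le_add_right _ _, hx.trans_lt (Nat.add_lt_add_left (Fin.isLt _) _)⟩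

theorem monotone_blockIndex : Monotone (blockIndex c h) := by
  intro x y hxy
  by_contra! hlt
  exact hxy.not_gt <| Fin.lt_def.2 <| (val_mem_Ico_blockIndex h y).2.trans_le <|
    (compPsum_add_le hlt).trans (val_mem_Ico_blockIndex h x).1

theorem blockIndex_eq_iff (x : Fin n) (i : Fin m) :
    blockIndex c h x = i ↔ compPsum c i ≤ x ∧ x < compPsum c i + c i := by
  refine ⟨?_, fun ⟨hle, hlt⟩ => ?_⟩
  · rintro rfl
    exact val_mem_Ico_blockIndex h x
  · obtain ⟨hle', hlt'⟩ := val_mem_Ico_blockIndex h x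
    obtain hi | hi | hi := lt_trichotomy (blockIndex c h x) i
    · exact absurd (hlt'.trans_le (compPsum_add_le hi)) hle.not_gt
    · exact hi
    · exact absurd (hlt.trans_le (compPsum_add_le hi)) hle'.not_gt

theorem card_blockIndex_eq (i : Fin m) : #{x | blockIndex c h x = i} = c i := by
  let e := (finCongr h.symm).trans finSigmaFinEquiv.symm
  calc #{x | blockIndex c h x = i}
      = #(({i} : Finset (Fin m)).sigma fun i => (univ : Finset (Fin (c i)))) :=
        card_equiv e fun x => by
          simp only [mem_filter, mem_univ, true_and, mem_sigma, mem_singleton, and_true]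
          rfl
    _ = c i := by simp

theorem mem_Xset_iff {σ : Perm (Fin n)} :
    σ ∈ Xset n c ↔ StrictMonoOnFibers (blockIndex c h) σ := by
  constructor
  · intro hσ a b hab hlt
    exact hσ _ a b (val_mem_Ico_blockIndex h a).1 hlt (hab ▸ (val_mem_Ico_blockIndex h b).2)
  · intro hσ i a b ha hlt hb
    have hab : (a : ℕ) < b := hlt
    have hai : blockIndex c h a = i := (blockIndex_eq_iff h a i).2 ⟨ha, hab.trans hb⟩
    have hbi : blockIndex c h b = i := (blockIndex_eq_iff h b i).2 ⟨ha.trans hab.le, hb⟩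
    exact hσ (hai.trans hbi.symm) hlt

end Blocks

section ColumnReading

variable {n k l : ℕ} {c : Fin k → ℕ} {d : Fin l → ℕ} {M : Fin k → Fin l → ℕ}

theorem colr_finProdFinEquiv (j : Fin l) (i : Fin k) : colr M (finProdFinEquiv (j, i)) = M i j := by
  have h := finProdFinEquiv.symm_apply_apply (j, i)
  simp only [finProdFinEquiv_symm_apply, Prod.mk.injEq] at h
  change M (finProdFinEquiv (j, i)).modNat (finProdFinEquiv (j, i)).divNat = M i j
  rw [h.1, h.2]

theorem sum_colr_eq (hcol : ∀ j, ∑ i, M i j = d j) (hdn : ∑ j, d j = n) : ∑ z, colr M z = n := by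
  simp only [← finProdFinEquiv.sum_comp, Fintype.sum_prod_type, colr_finProdFinEquiv, hcol, hdn]

theorem monotone_toLex_divNat_modNat :
    Monotone (fun z : Fin (l * k) => toLex (z.divNat, z.modNat)) := by
  refine monotone_toLex_iff.2 ⟨fun _ _ => Nat.div_le_div_right, fun a b hdiv hab => ?_⟩
  have hdiv : (a : ℕ) / k = b / k := congrArg Fin.val hdiv
  have hle : k * (b / k) + a % k ≤ k * (b / k) + b % k := by
    rwa [Nat.div_add_mod (b : ℕ), ← hdiv, Nat.div_add_mod]
  exact Nat.le_of_add_le_add_left hle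

/-- The row `i` of the entry `m_{ij}` in whose block of the column reading of `M` a position
lies. -/
def rowIndex (M : Fin k → Fin l → ℕ) (h : ∑ z, colr M z = n) (x : Fin n) : Fin k :=
  (blockIndex (colr M) h x).modNat

theorem card_divNat_eq_and_rowIndex_eq (h : ∑ z, colr M z = n) (i : Fin k) (j : Fin l) :
    #{x | (blockIndex (colr M) h x).divNat = j ∧ rowIndex M h x = i} = M i j := by
  rw [← colr_finProdFinEquiv (M := M), ← card_blockIndex_eq h]
  congr! 2 with x
  rw [← Equiv.symm_apply_eq, finProdFinEquiv_symm_apply, Prod.mk.injEq, rowIndex]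

variable (hcol : ∀ j, ∑ i, M i j = d j) (hdn : ∑ j, d j = n)

theorem divNat_blockIndex_colr (x : Fin n) :
    (blockIndex (colr M) (sum_colr_eq hcol hdn) x).divNat = blockIndex d hdn x := by
  have hmono : Monotone fun x => (blockIndex (colr M) (sum_colr_eq hcol hdn) x).divNat :=
    (monotone_toLex_iff.1 monotone_toLex_divNat_modNat).1.comp (monotone_blockIndex _)
  refine congrFun (eq_of_monotone_of_card_fiber_eq hmono (monotone_blockIndex hdn) fun j => ?_) x
  rw [card_blockIndex_eq, ← hcol, card_eq_sum_card_fiberwise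
    (f := rowIndex M (sum_colr_eq hcol hdn)) (t := univ) (by simp)]
  simp only [filter_filter, card_divNat_eq_and_rowIndex_eq]

theorem card_blockIndex_eq_and_rowIndex_eq (i : Fin k) (j : Fin l) :
    #{x | blockIndex d hdn x = j ∧ rowIndex M (sum_colr_eq hcol hdn) x = i} = M i j := by
  simp only [← divNat_blockIndex_colr hcol hdn, card_divNat_eq_and_rowIndex_eq]

theorem card_rowIndex_eq (hrow : ∀ i, ∑ j, M i j = c i) (i : Fin k) :
    #{x | rowIndex M (sum_colr_eq hcol hdn) x = i} = c i := by
  rw [← hrow, card_eq_sum_card_fiberwise (f := blockIndex d hdn) (t := univ) (by simp)]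
  refine sum_congr rfl fun j _ => ?_
  simp only [filter_filter, ← card_blockIndex_eq_and_rowIndex_eq hcol hdn, and_comm]

theorem monotone_toLex_blockIndex_rowIndex :
    Monotone (fun x => toLex (blockIndex d hdn x, rowIndex M (sum_colr_eq hcol hdn) x)) := by
  simp only [← divNat_blockIndex_colr hcol hdn]
  exact monotone_toLex_divNat_modNat.comp (monotone_blockIndex _)

theorem mem_Xset_colr_iff {π : Perm (Fin n)} :
    π ∈ Xset n (colr M) ↔
      StrictMonoOnFibers
        (fun x => (blockIndex d hdn x, rowIndex M (sum_colr_eq hcol hdn) x)) π := by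
  simp only [← divNat_blockIndex_colr hcol hdn]
  rw [mem_Xset_iff (sum_colr_eq hcol hdn)]
  exact (strictMonoOnFibers_comp_iff finProdFinEquiv.symm.injective).symm

variable (hcn : ∑ i, c i = n)

theorem mem_dblCoset_iff {σ : Perm (Fin n)} :
    σ ∈ dblCoset n c d M ↔
      ∀ i j, M i j = #{x | blockIndex d hdn x = j ∧ blockIndex c hcn (σ x) = i} := by
  simp only [dblCoset, Set.mem_ofPred_eq, blockIndex_eq_iff, and_assoc]

theorem mem_dblCoset_iff_blockIndex_comp_eq {σ : Perm (Fin n)} (hσ : σ ∈ Xset n d) :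
    σ ∈ dblCoset n c d M ↔ blockIndex c hcn ∘ σ = rowIndex M (sum_colr_eq hcol hdn) := by
  rw [mem_dblCoset_iff hdn hcn]
  constructor
  · intro hM
    have hmono : Monotone fun x => toLex (blockIndex d hdn x, (blockIndex c hcn ∘ σ) x) :=
      ((mem_Xset_iff hdn).1 hσ).monotone_toLex_comp (monotone_blockIndex hdn)
        (monotone_blockIndex hcn)
    have hcard : ∀ z, #{x | toLex (blockIndex d hdn x, (blockIndex c hcn ∘ σ) x) = z} =
        #{x | toLex (blockIndex d hdn x, rowIndex M (sum_colr_eq hcol hdn) x) = z} :=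
      toLex.forall_congr_right.1 fun ⟨j, i⟩ => by
        simp only [toLex_inj, Prod.mk.injEq, Function.comp_apply]
        exact (hM i j).symm.trans (card_blockIndex_eq_and_rowIndex_eq hcol hdn i j).symm
    have hpair := eq_of_monotone_of_card_fiber_eq hmono
      (monotone_toLex_blockIndex_rowIndex hcol hdn) hcard
    exact funext fun x => congrArg (fun z => (ofLex z).2) (congrFun hpair x)
  · intro hσr i j
    rw [← card_blockIndex_eq_and_rowIndex_eq hcol hdn, ← hσr]
    rfl

theorem mul_mem_Xset_colr_iff {ρ σ : Perm (Fin n)} (hρ : ρ ∈ Xset n c)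
    (hσ : blockIndex c hcn ∘ σ = rowIndex M (sum_colr_eq hcol hdn)) :
    ρ * σ ∈ Xset n (colr M) ↔ σ ∈ Xset n d := by
  have hmono := monotone_toLex_blockIndex_rowIndex hcol hdn
  rw [mem_Xset_colr_iff hcol hdn, mem_Xset_iff hdn, ← hσ]
  rw [← hσ] at hmono
  exact ((mem_Xset_iff hcn).1 hρ).comp_iff (monotone_blockIndex hcn) hmono

theorem existsUnique_blockIndex_comp_eq_and_mul_inv_mem_Xset (hrow : ∀ i, ∑ j, M i j = c i)
    (π : Perm (Fin n)) :
    ∃! σ : Perm (Fin n),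
      blockIndex c hcn ∘ σ = rowIndex M (sum_colr_eq hcol hdn) ∧ π * σ⁻¹ ∈ Xset n c := by
  simp only [mem_Xset_iff hcn]
  exact existsUnique_perm_comp_eq_and_strictMonoOnFibers (monotone_blockIndex hcn)
    (fun i => by rw [card_blockIndex_eq, card_rowIndex_eq hcol hdn hrow]) π

end ColumnReading

/-- Let `c`, `d` be compositions of `n` and `M ∈ 𝓜_{c,d}`.  Then
`X_{colr(M)}` is the disjoint union over `σ ∈ C(M) ∩ X_d` of the sets `X_c · σ`:
every element of `X_{colr(M)}` lies in exactly one set `X_c · σ`, and conversely every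
product `ρσ` with `ρ ∈ X_c`, `σ ∈ C(M) ∩ X_d` belongs to `X_{colr(M)}`. -/
theorem solomon_coset_decomposition
    {n k l : ℕ} (c : Fin k → ℕ) (d : Fin l → ℕ)
    (hc : ∀ i, 0 < c i) (hd : ∀ j, 0 < d j)
    (hcn : ∑ i, c i = n) (hdn : ∑ j, d j = n)
    (M : Fin k → Fin l → ℕ)
    (hrow : ∀ i, ∑ j, M i j = c i) (hcol : ∀ j, ∑ i, M i j = d j) :
    (∀ π : Equiv.Perm (Fin n), π ∈ Xset n (colr M) →
      ∃! σ : Equiv.Perm (Fin n),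
        (σ ∈ dblCoset n c d M ∧ σ ∈ Xset n d) ∧ ∃ ρ ∈ Xset n c, π = ρ * σ) ∧
    (∀ ρ ∈ Xset n c, ∀ σ : Equiv.Perm (Fin n),
      σ ∈ dblCoset n c d M → σ ∈ Xset n d → ρ * σ ∈ Xset n (colr M)) := by
  refine ⟨fun π hπ => ?_, fun ρ hρ σ hσM hσd => ?_⟩
  · obtain ⟨σ, ⟨hσ, hρ⟩, hunique⟩ :=
      existsUnique_blockIndex_comp_eq_and_mul_inv_mem_Xset hcol hdn hcn hrow π
    have hσd : σ ∈ Xset n d :=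
      (mul_mem_Xset_colr_iff hcol hdn hcn hρ hσ).1 (by rwa [inv_mul_cancel_right])
    have hσM := (mem_dblCoset_iff_blockIndex_comp_eq hcol hdn hcn hσd).2 hσ
    refine ⟨σ, ⟨⟨hσM, hσd⟩, π * σ⁻¹, hρ, (inv_mul_cancel_right π σ).symm⟩, ?_⟩
    rintro σ' ⟨⟨hσ'M, hσ'd⟩, ρ', hρ', rfl⟩
    exact hunique σ' ⟨(mem_dblCoset_iff_blockIndex_comp_eq hcol hdn hcn hσ'd).1 hσ'M,
      by rwa [mul_inv_cancel_right]⟩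
  · have hσ := (mem_dblCoset_iff_blockIndex_comp_eq hcol hdn hcn hσd).1 hσM
    exact (mul_mem_Xset_colr_iff hcol hdn hcn hρ hσ).2 hσd
end

section
/- For every finite group H, the representation ring R(H) has trivial Jacobson radical: the Jacobson radical of the commutative ring R(H) is the zero ideal. -/
/-!
Statement 10: the representation ring of a finite group has trivial Jacobson radical
(Proposition `pr:RepRingWoRad` of the paper).
-/

noncomputable section

/-- The representation ring `R(H)` of a finite group `H`: the subring of the ring `ℂ^H` of
`ℂ`-valued functions on `H` (with pointwise operations) generated by the characters of the
finite-dimensional complex representations of `H`; as a `ℤ`-module it is spanned by the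
irreducible characters, so its elements are exactly the virtual complex characters of `H`. -/
def RepRing (H : Type) [Group H] : Subring (H → ℂ) :=
  Subring.closure {f : H → ℂ | ∃ V : FDRep ℂ H, f = FDRep.character V}

/-!
Evaluating at `h : H` sends `R(H)` onto a subring `S` of `ℂ`. The eigenvalues of an element of
finite order are roots of unity, so `S` consists of algebraic integers. Every nonzero ideal of
the domain `S` then meets `ℤ` nontrivially, while the Jacobson radical of `S` meets `ℤ` inside the
Jacobson radical of `ℤ`, because an integer which is a unit of `S` is `±1`. So the radical of `S`
is zero, and an element of the radical of `R(H)` vanishes at every `h`.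
-/

section Jacobson

variable {R S A : Type*} [CommRing R] [CommRing S] [CommRing A]

theorem jacobson_bot_le_comap_of_surjective {f : R →+* S} (hf : Function.Surjective f) :
    (⊥ : Ideal R).jacobson ≤ (⊥ : Ideal S).jacobson.comap f :=
  (Ideal.jacobson_mono bot_le).trans (Ideal.comap_jacobson_of_surjective hf).ge

theorem comap_jacobson_bot_le_of_isLocalHom (f : R →+* S) [IsLocalHom f] :
    (⊥ : Ideal S).jacobson.comap f ≤ (⊥ : Ideal R).jacobson := by
  intro x hx
  refine Ideal.mem_jacobson_bot.2 fun y => isUnit_of_map_unit f _ ?_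
  simpa only [map_add, map_mul, map_one] using Ideal.mem_jacobson_bot.1 hx (f y)

theorem jacobson_bot_eq_bot_of_isIntegral [IsDomain S] [Algebra R S] [FaithfulSMul R S]
    [Algebra.IsIntegral R S] (hR : (⊥ : Ideal R).jacobson = ⊥) : (⊥ : Ideal S).jacobson = ⊥ :=
  have : Nontrivial R := (algebraMap R S).domain_nontrivial
  Ideal.eq_bot_of_comap_eq_bot <| eq_bot_iff.2 <|
    (comap_jacobson_bot_le_of_isLocalHom (algebraMap R S)).trans hR.le

theorem map_eq_zero_of_mem_jacobson_bot_of_isIntegral [IsDomain A] [Algebra R S] [Algebra R A]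
    [FaithfulSMul R A] (hR : (⊥ : Ideal R).jacobson = ⊥) (f : S →ₐ[R] A)
    (hf : ∀ s, IsIntegral R (f s)) {x : S} (hx : x ∈ (⊥ : Ideal S).jacobson) : f x = 0 := by
  have : FaithfulSMul R f.range := .tower_bot R f.range A
  have : Algebra.IsIntegral R f.range := by
    refine ⟨?_⟩
    rintro ⟨_, s, rfl⟩
    exact (isIntegral_algHom_iff f.range.val Subtype.val_injective).1 (hf s)
  have hrange : (⊥ : Ideal f.range).jacobson = ⊥ := jacobson_bot_eq_bot_of_isIntegral hR
  have hfx : f.rangeRestrict x ∈ (⊥ : Ideal f.range).jacobson :=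
    jacobson_bot_le_comap_of_surjective f.rangeRestrict_surjective hx
  rw [hrange, Ideal.mem_bot] at hfx
  exact congrArg Subtype.val hfx

theorem int_jacobson_bot : (⊥ : Ideal ℤ).jacobson = ⊥ := by
  refine eq_bot_iff.2 fun n hn => ?_
  rcases Int.isUnit_iff.1 (Ideal.mem_jacobson_bot.1 hn n) with hsq | hsq
  · simpa using hsq
  · nlinarith [mul_self_nonneg n]

end Jacobson

section Trace

variable {R K V : Type*} [CommRing R] [Field K] [Algebra R K] [AddCommGroup V] [Module K V]
  [Algebra R (Module.End K V)] [IsScalarTower R K (Module.End K V)] {f : Module.End K V}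

theorem isIntegral_of_hasEigenvalue (hf : IsIntegral R f) {μ : K} (hμ : f.HasEigenvalue μ) :
    IsIntegral R μ := by
  obtain ⟨p, hp, hpf⟩ := hf
  have hdvd : minpoly K f ∣ p.map (algebraMap R K) :=
    minpoly.dvd K f (by rwa [Polynomial.aeval_map_algebraMap])
  have hroot := (Module.End.isRoot_of_hasEigenvalue hμ).dvd hdvd
  exact ⟨p, hp, by rwa [← Polynomial.eval_map]⟩

theorem isIntegral_trace_of_splits_charpoly [FiniteDimensional K V] (hf : IsIntegral R f)
    (hsplits : f.charpoly.Splits) : IsIntegral R (LinearMap.trace K V f) := by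
  rw [Module.End.trace_eq_sum_roots_charpoly_of_splits hsplits]
  refine IsIntegral.multiset_sum fun μ hμ => isIntegral_of_hasEigenvalue hf ?_
  rw [Module.End.hasEigenvalue_iff_isRoot_charpoly]
  exact Polynomial.isRoot_of_mem_roots hμ

end Trace

theorem isIntegral_of_isOfFinOrder {R A : Type*} [CommRing R] [Ring A] [Algebra R A] {a : A}
    (ha : IsOfFinOrder a) : IsIntegral R a :=
  .of_pow ha.orderOf_pos (by rw [pow_orderOf_eq_one]; exact isIntegral_one)

theorem isIntegral_character_of_isOfFinOrder {k G V : Type*} [Field k] [IsAlgClosed k] [Monoid G]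
    [AddCommGroup V] [Module k V] [FiniteDimensional k V] (ρ : Representation k G V) {g : G}
    (hg : IsOfFinOrder g) : IsIntegral ℤ (ρ.character g) :=
  isIntegral_trace_of_splits_charpoly (isIntegral_of_isOfFinOrder (ρ.isOfFinOrder hg))
    (IsAlgClosed.splits _)

namespace RepRing

variable {H : Type} [Group H]

theorem isIntegral_apply {f : H → ℂ} (hf : f ∈ RepRing H) {h : H} (hh : IsOfFinOrder h) :
    IsIntegral ℤ (f h) := by
  suffices hle : RepRing H ≤ (integralClosure ℤ ℂ).toSubring.comap (Pi.evalRingHom _ h) from hle hf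
  refine Subring.closure_le.2 ?_
  rintro _ ⟨V, rfl⟩
  exact isIntegral_character_of_isOfFinOrder V.ρ hh

end RepRing

theorem repRing_jacobson_eq_bot_general (H : Type) [Group H] (hH : IsMulTorsion H) :
    (⊥ : Ideal (RepRing H)).jacobson = ⊥ := by
  refine eq_bot_iff.2 fun x hx => Subtype.ext <| funext fun h => ?_
  let eval : RepRing H →+* ℂ := (Pi.evalRingHom (fun _ => ℂ) h).comp (RepRing H).subtype
  exact map_eq_zero_of_mem_jacobson_bot_of_isIntegral int_jacobson_bot eval.toIntAlgHom
    (fun f => RepRing.isIntegral_apply f.2 (hH h)) hx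

/-- For every finite group `H`, the Jacobson radical of the commutative
ring `R(H)` (the intersection of all its maximal ideals) is the zero ideal. -/
theorem repRing_jacobson_eq_bot (H : Type) [Group H] [Finite H] :
    (⊥ : Ideal (RepRing H)).jacobson = ⊥ := by
  exact repRing_jacobson_eq_bot_general H isMulTorsion_of_finite
end
end

section
/- Two words w and w' with letters in 𝒜×B have the same insertion B-tableau P under the Robinson–Schensted–Okada correspondence if and only if there exists a finite sequence of words w = w_1, w_2, …, w_k = w' with w_j ~K w_{j+1} (coloured Knuth relations) for each j. -/
/-!
Statement 16: Knuth relations for the Robinson–Schensted–Okada correspondence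
(Proposition `pr:KnuthRSORel` of the paper).
-/

variable {A : Type*} [LinearOrder A] {B : Type*} [DecidableEq B]

/-- Row insertion (Schensted bumping) of a letter `x` into a row `r`:
`x` replaces the leftmost entry of `r` strictly greater than `x`, which is bumped out;
if there is no such entry, `x` is appended at the end of the row. -/
def rowInsert : List A → A → List A × Option A
  | [], x => ([x], none)
  | y :: ys, x =>
    if x < y then (x :: ys, some y)
    else
      let p := rowInsert ys x
      (y :: p.1, p.2)

/-- Insertion of a letter into a tableau (given as its list of rows), by successive
row bumping. -/
def tabInsert : List (List A) → A → List (List A)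
  | [], x => [[x]]
  | r :: rs, x =>
    match rowInsert r x with
    | (r', none) => r' :: rs
    | (r', some y) => r' :: tabInsert rs y

/-- The Robinson–Schensted insertion tableau of a word. -/
def RSInsertionTableau (w : List A) : List (List A) :=
  w.foldl tabInsert []

/-- The insertion `B`-tableau `P(w) = (P_b)_{b ∈ B}` of a word `w` with letters in `𝒜 × B`
under the Robinson–Schensted–Okada correspondence: `P_b` is the Robinson–Schensted
insertion tableau of the subword of first components taken at the positions of colour `b`. -/
def RSOInsertion (w : List (A × B)) : B → List (List A) := fun b =>
  RSInsertionTableau ((w.filter (fun x => x.2 = b)).map Prod.fst)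

/-- An (ordinary) Knuth relation on triples of letters:
`{acb, cab}` with `a ≤ b < c`, or `{bac, bca}` with `a < b ≤ c`. -/
def KnuthTriple (u u' : A × A × A) : Prop :=
  (∃ a b c : A, a ≤ b ∧ b < c ∧
    ((u = (a, c, b) ∧ u' = (c, a, b)) ∨ (u = (c, a, b) ∧ u' = (a, c, b)))) ∨
  (∃ a b c : A, a < b ∧ b ≤ c ∧
    ((u = (b, a, c) ∧ u' = (b, c, a)) ∨ (u = (b, c, a) ∧ u' = (b, a, c))))

/-- The coloured Knuth relations for words with letters in `𝒜 × B`: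
(c) exchange of two adjacent letters of different colours;
(d) an ordinary Knuth relation on three consecutive letters of the same colour. -/
def ColouredKnuthStep (w w' : List (A × B)) : Prop :=
  (∃ (u v : List (A × B)) (x y : A × B), x.2 ≠ y.2 ∧
      w = u ++ x :: y :: v ∧ w' = u ++ y :: x :: v) ∨
  (∃ (u v : List (A × B)) (b : B) (a₁ a₂ a₃ a₁' a₂' a₃' : A),
      w = u ++ (a₁, b) :: (a₂, b) :: (a₃, b) :: v ∧
      w' = u ++ (a₁', b) :: (a₂', b) :: (a₃', b) :: v ∧
      KnuthTriple (a₁, a₂, a₃) (a₁', a₂', a₃'))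

/-!
A letter inserted into a row either stays there or bumps a letter into the remaining rows, so
inserting a word into a row leaves a row and a bumped word. A Knuth move on the inserted word does
not change the row, and changes the bumped word by at most a Knuth move; descending row by row,
Knuth equivalent words have the same insertion tableau. Conversely, inserting a letter into a row
is itself a chain of Knuth moves, so every word is Knuth equivalent to the reading word of its
tableau. With colours, letters of distinct colours commute: a word is equivalent to the
concatenation of its monochromatic subwords, and these evolve independently.
-/

section RowInsertion

theorem rowInsert_cons_of_lt {x y : A} (r : List A) (h : x < y) :
    rowInsert (y :: r) x = (x :: r, some y) := by
  simp [rowInsert, h]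

theorem rowInsert_cons_of_le {x y : A} (r : List A) (h : y ≤ x) :
    rowInsert (y :: r) x = (y :: (rowInsert r x).1, (rowInsert r x).2) := by
  simp [rowInsert, not_lt.mpr h]

theorem eq_or_mem_of_mem_rowInsert {r : List A} {x y : A} (h : y ∈ (rowInsert r x).1) :
    y = x ∨ y ∈ r := by
  induction r with
  | nil => simpa [rowInsert] using h
  | cons z r ih =>
    rcases lt_or_ge x z with hxz | hzx
    · rw [rowInsert_cons_of_lt r hxz] at h
      grind
    · rw [rowInsert_cons_of_le r hzx] at h
      grind

theorem le_of_mem_rowInsert {r : List A} {x y l : A} (hr : ∀ z ∈ r, l ≤ z) (hx : l ≤ x)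
    (hy : y ∈ (rowInsert r x).1) : l ≤ y := by
  rcases eq_or_mem_of_mem_rowInsert hy with rfl | hy
  exacts [hx, hr y hy]

theorem pairwise_le_rowInsert {r : List A} (hr : r.Pairwise (· ≤ ·)) (x : A) :
    (rowInsert r x).1.Pairwise (· ≤ ·) := by
  induction r with
  | nil => simp [rowInsert]
  | cons z r ih =>
    obtain ⟨hz, hr⟩ := List.pairwise_cons.1 hr
    rcases lt_or_ge x z with hxz | hzx
    · rw [rowInsert_cons_of_lt r hxz]
      exact List.pairwise_cons.2 ⟨fun y hy => hxz.le.trans (hz y hy), hr⟩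
    · rw [rowInsert_cons_of_le r hzx]
      exact List.pairwise_cons.2 ⟨fun y => le_of_mem_rowInsert hz hzx, ih hr⟩

theorem mem_and_lt_of_rowInsert_eq_some {r : List A} {x y : A} (h : (rowInsert r x).2 = some y) :
    y ∈ r ∧ x < y := by
  induction r with
  | nil => simp [rowInsert] at h
  | cons z r ih =>
    rcases lt_or_ge x z with hxz | hzx
    · rw [rowInsert_cons_of_lt r hxz, Option.some.injEq] at h
      subst h
      exact ⟨List.mem_cons_self, hxz⟩
    · rw [rowInsert_cons_of_le r hzx] at h
      exact ⟨List.mem_cons_of_mem z (ih h).1, (ih h).2⟩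

theorem exists_cons_eq_rowInsert (r : List A) (x : A) :
    ∃ s t, (rowInsert r x).1 = s :: t ∧ s ≤ x := by
  rcases r with _ | ⟨z, r⟩
  · exact ⟨x, [], rfl, le_rfl⟩
  · rcases lt_or_ge x z with hxz | hzx
    · exact ⟨x, r, by rw [rowInsert_cons_of_lt r hxz], le_rfl⟩
    · exact ⟨z, _, by rw [rowInsert_cons_of_le r hzx], hzx⟩

theorem exists_bump_le_of_lt (r : List A) {b c : A} (hbc : b < c) :
    ∃ d, (rowInsert (rowInsert r c).1 b).2 = some d ∧ d ≤ c := by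
  induction r with
  | nil => exact ⟨c, by simp [rowInsert, hbc], le_rfl⟩
  | cons z r ih =>
    rcases lt_or_ge c z with hcz | hzc
    · exact ⟨c, by rw [rowInsert_cons_of_lt r hcz, rowInsert_cons_of_lt r hbc], le_rfl⟩
    · rw [rowInsert_cons_of_le r hzc]
      rcases lt_or_ge b z with hbz | hzb
      · exact ⟨z, by rw [rowInsert_cons_of_lt _ hbz], hzc⟩
      · rwa [rowInsert_cons_of_le _ hzb]

theorem exists_bump_le_of_le {r : List A} (hr : r.Pairwise (· ≤ ·)) {b c e : A} (hbc : b ≤ c)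
    (he : (rowInsert (rowInsert r b).1 c).2 = some e) :
    ∃ d, (rowInsert r b).2 = some d ∧ d ≤ e := by
  induction r with
  | nil => simp [rowInsert, not_lt.mpr hbc] at he
  | cons z r ih =>
    obtain ⟨hz, hr⟩ := List.pairwise_cons.1 hr
    rcases lt_or_ge b z with hbz | hzb
    · rw [rowInsert_cons_of_lt r hbz] at he ⊢
      rw [rowInsert_cons_of_le r hbc] at he
      exact ⟨z, rfl, hz e (mem_and_lt_of_rowInsert_eq_some he).1⟩
    · rw [rowInsert_cons_of_le r hzb] at he ⊢
      rw [rowInsert_cons_of_le _ (hzb.trans hbc)] at he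
      exact ih hr he

/-- Insertion of a word into a row, letter by letter: the resulting row, together with the word of
bumped letters in the order in which they leave the row. -/
def rowInsertWord : List A → List A → List A × List A
  | r, [] => (r, [])
  | r, x :: w =>
    ((rowInsertWord (rowInsert r x).1 w).1,
      (rowInsert r x).2.toList ++ (rowInsertWord (rowInsert r x).1 w).2)

theorem rowInsertWord_cons_of_forall_le {y : A} {w : List A} (r : List A) (h : ∀ x ∈ w, y ≤ x) :
    rowInsertWord (y :: r) w = (y :: (rowInsertWord r w).1, (rowInsertWord r w).2) := by
  induction w generalizing r with
  | nil => rfl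
  | cons x w ih =>
    obtain ⟨hx, hw⟩ := List.forall_mem_cons.1 h
    simp only [rowInsertWord, rowInsert_cons_of_le r hx, ih _ hw]

end RowInsertion

section KnuthMoves

/-- The elementary Knuth relations `acb ~ cab` (`a ≤ b < c`) and `bac ~ bca` (`a < b ≤ c`) on
three-letter words, each read in one direction only. -/
inductive KnuthMove : List A → List A → Prop
  | swap_left {a b c : A} (hab : a ≤ b) (hbc : b < c) : KnuthMove [a, c, b] [c, a, b]
  | swap_right {a b c : A} (hab : a < b) (hbc : b ≤ c) : KnuthMove [b, a, c] [b, c, a]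

open Relation (EqvGen)

theorem rowInsertWord_cons_swap_left_of_lt {y : A} {r : List A}
    (hr : (y :: r).Pairwise (· ≤ ·)) {a b c : A} (hab : a ≤ b) (hbc : b < c) (hay : a < y) :
    (rowInsertWord (y :: r) [a, c, b]).1 = (rowInsertWord (y :: r) [c, a, b]).1 ∧
      EqvGen KnuthMove (rowInsertWord (y :: r) [a, c, b]).2
        (rowInsertWord (y :: r) [c, a, b]).2 := by
  have hac := hab.trans_lt hbc
  obtain ⟨hy, hr⟩ := List.pairwise_cons.1 hr
  simp only [rowInsertWord, rowInsert_cons_of_lt _ hay, rowInsert_cons_of_le _ hac.le,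
    rowInsert_cons_of_le _ hab]
  rcases lt_or_ge c y with hcy | hyc
  · simp only [rowInsert_cons_of_lt _ hcy, rowInsert_cons_of_lt _ hac, rowInsert_cons_of_le _ hab]
    rcases r with _ | ⟨q, r⟩
    · simp [rowInsert, hbc, EqvGen.refl]
    · have hyq : y ≤ q := hy q List.mem_cons_self
      have hcq := hcy.trans_le hyq
      simp only [rowInsert_cons_of_lt _ hcq, rowInsert_cons_of_lt _ hbc,
        rowInsert_cons_of_lt _ (hbc.trans hcq)]
      exact ⟨trivial, .symm _ _ (.rel _ _ (.swap_right hcy hyq))⟩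
  · simp only [rowInsert_cons_of_le _ hyc, rowInsert_cons_of_lt _ hay, rowInsert_cons_of_le _ hab]
    obtain ⟨d, hd, hdc⟩ := exists_bump_le_of_lt r hbc
    have hyd : y ≤ d := le_of_mem_rowInsert hy hyc (mem_and_lt_of_rowInsert_eq_some hd).1
    rcases he : (rowInsert r c).2 with _ | e
    · exact ⟨trivial, .refl _⟩
    · have hde : d < e := hdc.trans_lt (mem_and_lt_of_rowInsert_eq_some he).2
      simpa [hd] using EqvGen.rel _ _ (KnuthMove.swap_left hyd hde)

theorem rowInsertWord_swap_left {r : List A} (hr : r.Pairwise (· ≤ ·)) {a b c : A}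
    (hab : a ≤ b) (hbc : b < c) :
    (rowInsertWord r [a, c, b]).1 = (rowInsertWord r [c, a, b]).1 ∧
      EqvGen KnuthMove (rowInsertWord r [a, c, b]).2 (rowInsertWord r [c, a, b]).2 := by
  have hac := hab.trans_lt hbc
  induction r with
  | nil =>
    simp [rowInsertWord, rowInsert, hac, hbc, not_lt.mpr hab, not_lt.mpr hac.le, EqvGen.refl]
  | cons y r ih =>
    rcases le_or_gt y a with hya | hay
    · have hyb := hya.trans hab
      have hyc := hya.trans hac.le
      rw [rowInsertWord_cons_of_forall_le r (by simp [hya, hyb, hyc]),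
        rowInsertWord_cons_of_forall_le r (by simp [hya, hyb, hyc])]
      exact (ih hr.of_cons).imp_left (congrArg (y :: ·))
    · exact rowInsertWord_cons_swap_left_of_lt hr hab hbc hay

theorem rowInsertWord_cons_swap_right_of_lt {y : A} {r : List A}
    (hr : (y :: r).Pairwise (· ≤ ·)) {a b c : A} (hab : a < b) (hbc : b ≤ c) (hay : a < y) :
    (rowInsertWord (y :: r) [b, a, c]).1 = (rowInsertWord (y :: r) [b, c, a]).1 ∧
      EqvGen KnuthMove (rowInsertWord (y :: r) [b, a, c]).2
        (rowInsertWord (y :: r) [b, c, a]).2 := by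
  have hac := hab.trans_le hbc
  obtain ⟨hy, hr⟩ := List.pairwise_cons.1 hr
  simp only [rowInsertWord]
  rcases lt_or_ge b y with hby | hyb
  · simp only [rowInsert_cons_of_lt _ hby, rowInsert_cons_of_lt _ hab,
      rowInsert_cons_of_le _ hac.le, rowInsert_cons_of_le _ hbc]
    rcases he : (rowInsert r c).2 with _ | e
    · exact ⟨trivial, .refl _⟩
    · have hye : y ≤ e := hy e (mem_and_lt_of_rowInsert_eq_some he).1
      exact ⟨trivial, .rel _ _ (.swap_right hby hye)⟩
  · simp only [rowInsert_cons_of_le _ hyb, rowInsert_cons_of_lt _ hay,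
      rowInsert_cons_of_le _ hac.le, rowInsert_cons_of_le _ (hyb.trans hbc)]
    rcases he : (rowInsert (rowInsert r b).1 c).2 with _ | e
    · simp [EqvGen.refl]
    · obtain ⟨d, hd, hde⟩ := exists_bump_le_of_le hr hbc he
      have hyd : y < d := hyb.trans_lt (mem_and_lt_of_rowInsert_eq_some hd).2
      simpa [hd] using EqvGen.rel _ _ (KnuthMove.swap_right hyd hde)

theorem rowInsertWord_swap_right {r : List A} (hr : r.Pairwise (· ≤ ·)) {a b c : A}
    (hab : a < b) (hbc : b ≤ c) :
    (rowInsertWord r [b, a, c]).1 = (rowInsertWord r [b, c, a]).1 ∧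
      EqvGen KnuthMove (rowInsertWord r [b, a, c]).2 (rowInsertWord r [b, c, a]).2 := by
  have hac := hab.trans_le hbc
  induction r with
  | nil =>
    simp [rowInsertWord, rowInsert, hab, not_lt.mpr hbc, not_lt.mpr hac.le, EqvGen.refl]
  | cons y r ih =>
    rcases le_or_gt y a with hya | hay
    · have hyb := hya.trans hab.le
      have hyc := hya.trans hac.le
      rw [rowInsertWord_cons_of_forall_le r (by simp [hya, hyb, hyc]),
        rowInsertWord_cons_of_forall_le r (by simp [hya, hyb, hyc])]
      exact (ih hr.of_cons).imp_left (congrArg (y :: ·))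
    · exact rowInsertWord_cons_swap_right_of_lt hr hab hbc hay

theorem KnuthMove.rowInsertWord_fst_eq_and_eqvGen_snd {m m' r : List A} (h : KnuthMove m m')
    (hr : r.Pairwise (· ≤ ·)) :
    (rowInsertWord r m).1 = (rowInsertWord r m').1 ∧
      EqvGen KnuthMove (rowInsertWord r m).2 (rowInsertWord r m').2 := by
  cases h with
  | swap_left hab hbc => exact rowInsertWord_swap_left hr hab hbc
  | swap_right hab hbc => exact rowInsertWord_swap_right hr hab hbc

end KnuthMoves

section TableauInsertion

/-- Every row of the tableau `T`, given as its list of rows, is weakly increasing. This is the only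
property of semistandard tableaux on which invariance under Knuth moves depends. -/
def HasSortedRows (T : List (List A)) : Prop :=
  ∀ r ∈ T, r.Pairwise (· ≤ ·)

theorem hasSortedRows_cons {r : List A} {T : List (List A)} :
    HasSortedRows (r :: T) ↔ r.Pairwise (· ≤ ·) ∧ HasSortedRows T :=
  List.forall_mem_cons

theorem tabInsert_cons (r : List A) (T : List (List A)) (x : A) :
    tabInsert (r :: T) x = (rowInsert r x).1 :: (rowInsert r x).2.toList.foldl tabInsert T := by
  rw [tabInsert]
  rcases rowInsert r x with ⟨r', _ | y⟩ <;> rfl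

theorem hasSortedRows_tabInsert {T : List (List A)} (hT : HasSortedRows T) (x : A) :
    HasSortedRows (tabInsert T x) := by
  induction T generalizing x with
  | nil => simp [HasSortedRows, tabInsert]
  | cons r T ih =>
    obtain ⟨hr, hT⟩ := hasSortedRows_cons.1 hT
    rw [tabInsert_cons, hasSortedRows_cons]
    refine ⟨pairwise_le_rowInsert hr x, ?_⟩
    rcases (rowInsert r x).2 with _ | y
    exacts [hT, ih hT y]

theorem hasSortedRows_foldl_tabInsert {T : List (List A)} (hT : HasSortedRows T) (w : List A) :
    HasSortedRows (w.foldl tabInsert T) := by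
  induction w generalizing T with
  | nil => exact hT
  | cons x _ ih => exact ih (hasSortedRows_tabInsert hT x)

theorem hasSortedRows_rsInsertionTableau (w : List A) : HasSortedRows (RSInsertionTableau w) :=
  hasSortedRows_foldl_tabInsert (by simp [HasSortedRows]) w

theorem foldl_tabInsert_cons (w r : List A) (T : List (List A)) :
    w.foldl tabInsert (r :: T) =
      (rowInsertWord r w).1 :: (rowInsertWord r w).2.foldl tabInsert T := by
  induction w generalizing r T with
  | nil => rfl
  | cons x w ih => rw [List.foldl_cons, tabInsert_cons, ih, rowInsertWord, List.foldl_append]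

theorem KnuthMove.foldl_tabInsert_nil {m m' : List A} (h : KnuthMove m m') :
    m.foldl tabInsert [] = m'.foldl tabInsert [] := by
  cases h with
  | swap_left hab hbc =>
    have hac := hab.trans_lt hbc
    simp [tabInsert, rowInsert, hac, hbc, not_lt.mpr hab, not_lt.mpr hac.le]
  | swap_right hab hbc =>
    have hac := hab.trans_le hbc
    simp [tabInsert, rowInsert, hab, not_lt.mpr hbc, not_lt.mpr hac.le]

theorem KnuthMove.foldl_tabInsert {m m' : List A} (h : KnuthMove m m') {T : List (List A)}
    (hT : HasSortedRows T) : m.foldl tabInsert T = m'.foldl tabInsert T := by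
  induction T generalizing m m' with
  | nil => exact h.foldl_tabInsert_nil
  | cons r T ih =>
    obtain ⟨hr, hT⟩ := hasSortedRows_cons.1 hT
    obtain ⟨row_eq, bumped_eqv⟩ := h.rowInsertWord_fst_eq_and_eqvGen_snd hr
    have rest_eq : (rowInsertWord r m).2.foldl tabInsert T =
        (rowInsertWord r m').2.foldl tabInsert T :=
      congrArg (Quot.lift (List.foldl tabInsert T) fun _ _ h => ih h hT)
        (Quot.eqvGen_sound bumped_eqv)
    rw [foldl_tabInsert_cons, foldl_tabInsert_cons, row_eq, rest_eq]

end TableauInsertion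

section KnuthEquivalence

/-- Knuth equivalence of words: the congruence on words generated by the elementary Knuth
relations, whose quotient is the plactic monoid. -/
inductive KnuthEquiv : List A → List A → Prop
  | of_move {m m' : List A} (h : KnuthMove m m') : KnuthEquiv m m'
  | refl (w : List A) : KnuthEquiv w w
  | symm {w w' : List A} (h : KnuthEquiv w w') : KnuthEquiv w' w
  | trans {u v w : List A} (h : KnuthEquiv u v) (h' : KnuthEquiv v w) : KnuthEquiv u w
  | append {u u' v v' : List A} (h : KnuthEquiv u u') (h' : KnuthEquiv v v') :
      KnuthEquiv (u ++ v) (u' ++ v')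

instance : Trans (α := List A) KnuthEquiv KnuthEquiv KnuthEquiv := ⟨.trans⟩

theorem KnuthEquiv.cons (x : A) {w w' : List A} (h : KnuthEquiv w w') :
    KnuthEquiv (x :: w) (x :: w') :=
  .append (.refl [x]) h

theorem KnuthEquiv.length_eq {w w' : List A} (h : KnuthEquiv w w') : w.length = w'.length := by
  induction h with
  | of_move h => cases h <;> rfl
  | refl => rfl
  | symm _ ih => exact ih.symm
  | trans _ _ ih ih' => exact ih.trans ih'
  | append _ _ ih ih' => rw [List.length_append, List.length_append, ih, ih']

theorem KnuthEquiv.foldl_tabInsert {w w' : List A} (h : KnuthEquiv w w') {T : List (List A)}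
    (hT : HasSortedRows T) : w.foldl tabInsert T = w'.foldl tabInsert T := by
  induction h generalizing T with
  | of_move h => exact h.foldl_tabInsert hT
  | refl => rfl
  | symm _ ih => exact (ih hT).symm
  | trans _ _ ih ih' => exact (ih hT).trans (ih' hT)
  | append _ _ ih ih' =>
    rw [List.foldl_append, List.foldl_append, ih hT, ih' (hasSortedRows_foldl_tabInsert hT _)]

theorem knuthEquiv_cons_append_singleton {x z : A} {r : List A}
    (hr : (z :: r).Pairwise (· ≤ ·)) (hxz : x < z) :
    KnuthEquiv (z :: (r ++ [x])) (z :: x :: r) := by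
  induction r generalizing z with
  | nil => exact .refl _
  | cons y r ih =>
    obtain ⟨hz, hr⟩ := List.pairwise_cons.1 hr
    have hzy : z ≤ y := hz y List.mem_cons_self
    calc
      KnuthEquiv (z :: y :: (r ++ [x])) (z :: y :: x :: r) := (ih hr (hxz.trans_le hzy)).cons z
      KnuthEquiv ([z, y, x] ++ r) ([z, x, y] ++ r) :=
        .append (.symm (.of_move (.swap_right hxz hzy))) (.refl r)

theorem knuthEquiv_rowInsert {r : List A} (hr : r.Pairwise (· ≤ ·)) (x : A) :
    KnuthEquiv (r ++ [x]) ((rowInsert r x).2.toList ++ (rowInsert r x).1) := by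
  induction r with
  | nil => exact .refl _
  | cons z r ih =>
    rcases lt_or_ge x z with hxz | hzx
    · rw [rowInsert_cons_of_lt r hxz]
      exact knuthEquiv_cons_append_singleton hr hxz
    · obtain ⟨hz, hr⟩ := List.pairwise_cons.1 hr
      rw [rowInsert_cons_of_le r hzx]
      refine ((ih hr).cons z).trans ?_
      rcases hy : (rowInsert r x).2 with _ | y
      · exact .refl _
      · obtain ⟨s, t, hst, hsx⟩ := exists_cons_eq_rowInsert r x
        have hzs : z ≤ s := le_of_mem_rowInsert hz hzx (hst ▸ List.mem_cons_self)
        have hsy : s < y := hsx.trans_lt (mem_and_lt_of_rowInsert_eq_some hy).2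
        rw [hst]
        exact .append (.of_move (.swap_left hzs hsy)) (.refl t)

/-- The row reading word of a tableau: its rows, from the last one to the first. -/
def readingWord (T : List (List A)) : List A :=
  T.reverse.flatten

omit [LinearOrder A] in
theorem readingWord_cons (r : List A) (T : List (List A)) :
    readingWord (r :: T) = readingWord T ++ r := by
  simp [readingWord]

theorem knuthEquiv_readingWord_tabInsert {T : List (List A)} (hT : HasSortedRows T) (x : A) :
    KnuthEquiv (readingWord T ++ [x]) (readingWord (tabInsert T x)) := by
  induction T generalizing x with
  | nil => exact .refl _
  | cons r T ih =>
    obtain ⟨hr, hT⟩ := hasSortedRows_cons.1 hT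
    have insert_bumped : KnuthEquiv (readingWord T ++ (rowInsert r x).2.toList)
        (readingWord ((rowInsert r x).2.toList.foldl tabInsert T)) := by
      rcases (rowInsert r x).2 with _ | y
      · simpa using KnuthEquiv.refl (readingWord T)
      · exact ih hT y
    rw [tabInsert_cons, readingWord_cons, readingWord_cons, List.append_assoc]
    calc
      KnuthEquiv (readingWord T ++ (r ++ [x]))
          (readingWord T ++ ((rowInsert r x).2.toList ++ (rowInsert r x).1)) :=
        .append (.refl _) (knuthEquiv_rowInsert hr x)
      KnuthEquiv _ (readingWord ((rowInsert r x).2.toList.foldl tabInsert T) ++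
          (rowInsert r x).1) := by
        rw [← List.append_assoc]
        exact .append insert_bumped (.refl _)

theorem knuthEquiv_readingWord_rsInsertionTableau (w : List A) :
    KnuthEquiv w (readingWord (RSInsertionTableau w)) := by
  induction w using List.reverseRecOn with
  | nil => exact .refl _
  | append_singleton w x ih =>
    rw [RSInsertionTableau, List.foldl_append]
    exact (ih.append (.refl [x])).trans
      (knuthEquiv_readingWord_tabInsert (hasSortedRows_rsInsertionTableau w) x)

theorem rsInsertionTableau_eq_iff_knuthEquiv {w w' : List A} :
    RSInsertionTableau w = RSInsertionTableau w' ↔ KnuthEquiv w w' := by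
  refine ⟨fun h => ?_, fun h => h.foldl_tabInsert (by simp [HasSortedRows])⟩
  have hw' := (knuthEquiv_readingWord_rsInsertionTableau w').symm
  rw [← h] at hw'
  exact (knuthEquiv_readingWord_rsInsertionTableau w).trans hw'

theorem KnuthTriple.symm {t t' : A × A × A} (h : KnuthTriple t t') : KnuthTriple t' t := by
  rcases h with ⟨a, b, c, hab, hbc, h⟩ | ⟨a, b, c, hab, hbc, h⟩
  · exact .inl ⟨a, b, c, hab, hbc, h.symm.imp And.symm And.symm⟩
  · exact .inr ⟨a, b, c, hab, hbc, h.symm.imp And.symm And.symm⟩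

theorem KnuthTriple.knuthEquiv {a₁ a₂ a₃ a₁' a₂' a₃' : A}
    (h : KnuthTriple (a₁, a₂, a₃) (a₁', a₂', a₃')) :
    KnuthEquiv [a₁, a₂, a₃] [a₁', a₂', a₃'] := by
  rcases h with ⟨a, b, c, hab, hbc, ⟨⟨⟩, ⟨⟩⟩ | ⟨⟨⟩, ⟨⟩⟩⟩ | ⟨a, b, c, hab, hbc, ⟨⟨⟩, ⟨⟩⟩ | ⟨⟨⟩, ⟨⟩⟩⟩
  · exact .of_move (.swap_left hab hbc)
  · exact .symm (.of_move (.swap_left hab hbc))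
  · exact .of_move (.swap_right hab hbc)
  · exact .symm (.of_move (.swap_right hab hbc))

end KnuthEquivalence

section ColouredKnuthEquivalence

omit [DecidableEq B]

/-- Coloured Knuth equivalence: being linked by a finite chain of coloured Knuth relations. -/
abbrev ColouredKnuthEquiv : List (A × B) → List (A × B) → Prop :=
  Relation.ReflTransGen ColouredKnuthStep

theorem ColouredKnuthStep.symm {w w' : List (A × B)} (h : ColouredKnuthStep w w') :
    ColouredKnuthStep w' w := by
  rcases h with ⟨u, v, x, y, hxy, hw, hw'⟩ | ⟨u, v, b, _, _, _, _, _, _, hw, hw', h⟩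
  · exact .inl ⟨u, v, y, x, hxy.symm, hw', hw⟩
  · exact .inr ⟨u, v, b, _, _, _, _, _, _, hw', hw, h.symm⟩

theorem ColouredKnuthStep.append_append {w w' : List (A × B)} (h : ColouredKnuthStep w w')
    (p q : List (A × B)) : ColouredKnuthStep (p ++ w ++ q) (p ++ w' ++ q) := by
  rcases h with ⟨u, v, x, y, hxy, rfl, rfl⟩ | ⟨u, v, b, _, _, _, _, _, _, rfl, rfl, h⟩
  · exact .inl ⟨p ++ u, v ++ q, x, y, hxy, by simp, by simp⟩
  · exact .inr ⟨p ++ u, v ++ q, b, _, _, _, _, _, _, by simp, by simp, h⟩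

theorem ColouredKnuthEquiv.symm {w w' : List (A × B)} (h : ColouredKnuthEquiv w w') :
    ColouredKnuthEquiv w' w := by
  induction h with
  | refl => exact .refl
  | tail _ h ih => exact .head h.symm ih

theorem ColouredKnuthEquiv.append {u u' v v' : List (A × B)} (h : ColouredKnuthEquiv u u')
    (h' : ColouredKnuthEquiv v v') : ColouredKnuthEquiv (u ++ v) (u' ++ v') := by
  have left : ColouredKnuthEquiv (u ++ v) (u' ++ v) :=
    h.lift (· ++ v) fun _ _ step => step.append_append [] v
  have right : ColouredKnuthEquiv (u' ++ v) (u' ++ v') :=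
    h'.lift (u' ++ ·) fun _ _ step => by simpa using step.append_append u' []
  exact left.trans right

theorem ColouredKnuthEquiv.cons (x : A × B) {w w' : List (A × B)} (h : ColouredKnuthEquiv w w') :
    ColouredKnuthEquiv (x :: w) (x :: w') :=
  ColouredKnuthEquiv.append (u := [x]) .refl h

theorem KnuthEquiv.colouredKnuthEquiv_map {w w' : List A} (h : KnuthEquiv w w') (b : B) :
    ColouredKnuthEquiv (w.map (·, b)) (w'.map (·, b)) := by
  induction h with
  | of_move h =>
    refine .single (.inr ?_)
    cases h with
    | swap_left hab hbc =>
      exact ⟨[], [], b, _, _, _, _, _, _, rfl, rfl,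
        .inl ⟨_, _, _, hab, hbc, .inl ⟨rfl, rfl⟩⟩⟩
    | swap_right hab hbc =>
      exact ⟨[], [], b, _, _, _, _, _, _, rfl, rfl,
        .inr ⟨_, _, _, hab, hbc, .inl ⟨rfl, rfl⟩⟩⟩
  | refl => exact .refl
  | symm _ ih => exact ih.symm
  | trans _ _ ih ih' => exact ih.trans ih'
  | append _ _ ih ih' =>
    rw [List.map_append, List.map_append]
    exact ih.append ih'

theorem colouredKnuthEquiv_cons_append {x : A × B} {u : List (A × B)}
    (hu : ∀ y ∈ u, y.2 ≠ x.2) (v : List (A × B)) :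
    ColouredKnuthEquiv (x :: (u ++ v)) (u ++ x :: v) := by
  induction u with
  | nil => exact .refl
  | cons y u ih =>
    obtain ⟨hyx, hu⟩ := List.forall_mem_cons.1 hu
    exact .head (.inl ⟨[], u ++ v, x, y, hyx.symm, rfl, rfl⟩) ((ih hu).cons y)

end ColouredKnuthEquivalence

section ColourSubwords

/-- The subword `w^{(b)}` of the letters of colour `b` in `w`, with their colours forgotten. -/
def colourSubword (b : B) (w : List (A × B)) : List A :=
  (w.filter (fun x => x.2 = b)).map Prod.fst

theorem ColouredKnuthStep.knuthEquiv_colourSubword {w w' : List (A × B)}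
    (h : ColouredKnuthStep w w') (c : B) :
    KnuthEquiv (colourSubword c w) (colourSubword c w') := by
  rcases h with ⟨u, v, x, y, hxy, rfl, rfl⟩ | ⟨u, v, b, _, _, _, _, _, _, rfl, rfl, h⟩
  · have subword_eq : colourSubword c (u ++ x :: y :: v) = colourSubword c (u ++ y :: x :: v) := by
      grind [colourSubword]
    exact subword_eq ▸ .refl _
  · by_cases hbc : b = c
    · simpa [colourSubword, hbc] using
        KnuthEquiv.append (.refl (colourSubword c u))
          (h.knuthEquiv.append (.refl (colourSubword c v)))
    · simpa [colourSubword, hbc] using KnuthEquiv.refl (colourSubword c (u ++ v))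

theorem ColouredKnuthEquiv.knuthEquiv_colourSubword {w w' : List (A × B)}
    (h : ColouredKnuthEquiv w w') (c : B) :
    KnuthEquiv (colourSubword c w) (colourSubword c w') := by
  induction h with
  | refl => exact .refl _
  | tail _ step ih => exact ih.trans (step.knuthEquiv_colourSubword c)

theorem colouredKnuthEquiv_split_colour (b : B) (w : List (A × B)) :
    ColouredKnuthEquiv w
      ((colourSubword b w).map (·, b) ++ w.filter (fun x => x.2 ≠ b)) := by
  induction w with
  | nil => exact .refl
  | cons x w ih =>
    refine (ih.cons x).trans ?_
    by_cases hx : x.2 = b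
    · subst hx
      simpa [colourSubword] using Relation.ReflTransGen.refl
    · have move_past := colouredKnuthEquiv_cons_append (x := x)
        (u := (colourSubword b w).map (·, b)) (by simp [Ne.symm hx])
        (w.filter fun x => x.2 ≠ b)
      simpa [colourSubword, hx] using move_past

omit [LinearOrder A] in
theorem colourSubword_filter_ne (b c : B) (w : List (A × B)) :
    colourSubword c (w.filter fun x => x.2 ≠ b) = if c = b then [] else colourSubword c w := by
  induction w with
  | nil => simp [colourSubword]
  | cons x w ih => grind [colourSubword]

theorem colouredKnuthEquiv_of_knuthEquiv_colourSubword {w w' : List (A × B)}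
    (h : ∀ c, KnuthEquiv (colourSubword c w) (colourSubword c w')) : ColouredKnuthEquiv w w' := by
  induction hn : w.length using Nat.strong_induction_on generalizing w w' with
  | _ n ih =>
    rcases w with _ | ⟨x, w⟩
    · rcases w' with _ | ⟨y, w'⟩
      · exact .refl
      · simpa [colourSubword] using (h y.2).length_eq
    · have rest_shorter : ((x :: w).filter fun y => y.2 ≠ x.2).length < n := by
        rw [← hn, List.length_filter_lt_length_iff_exists]
        exact ⟨x, List.mem_cons_self, by simp⟩
      have rest_equiv : ColouredKnuthEquiv ((x :: w).filter fun y => y.2 ≠ x.2)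
          (w'.filter fun y => y.2 ≠ x.2) := by
        refine ih _ rest_shorter (fun c => ?_) rfl
        rw [colourSubword_filter_ne, colourSubword_filter_ne]
        split_ifs
        exacts [.refl [], h c]
      have colour_equiv := (h x.2).colouredKnuthEquiv_map x.2
      exact ((colouredKnuthEquiv_split_colour x.2 _).trans (colour_equiv.append rest_equiv)).trans
        (colouredKnuthEquiv_split_colour x.2 w').symm

theorem colouredKnuthEquiv_iff_knuthEquiv_colourSubword {w w' : List (A × B)} :
    ColouredKnuthEquiv w w' ↔ ∀ c, KnuthEquiv (colourSubword c w) (colourSubword c w') :=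
  ⟨fun h => h.knuthEquiv_colourSubword, colouredKnuthEquiv_of_knuthEquiv_colourSubword⟩

end ColourSubwords

/-- Two words `w`, `w'` with letters in `𝒜 × B` have the same insertion
`B`-tableau under the Robinson–Schensted–Okada correspondence if and only if they are
related by a finite chain of coloured Knuth relations. -/
theorem rso_knuth (w w' : List (A × B)) :
    RSOInsertion w = RSOInsertion w' ↔
      Relation.ReflTransGen ColouredKnuthStep w w' := by
  calc
    RSOInsertion w = RSOInsertion w' ↔
        ∀ c, RSInsertionTableau (colourSubword c w) = RSInsertionTableau (colourSubword c w') :=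
      funext_iff
    _ ↔ ∀ c, KnuthEquiv (colourSubword c w) (colourSubword c w') :=
      forall_congr' fun _ => rsInsertionTableau_eq_iff_knuthEquiv
    _ ↔ Relation.ReflTransGen ColouredKnuthStep w w' :=
      colouredKnuthEquiv_iff_knuthEquiv_colourSubword.symm
end
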